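/- For 0 ≤ k ≤ n−1, Θ(CrossPoly(n,k)) is homotopy equivalent to a wedge of C(n−1, k) copies of the sphere S^{2n−k−2} (where C(n−1,k) is the binomial coefficient). -/

import Mathlib

/-- A hypergraph on vertex type `V` is given by its set `H` of hyperedges
(subsets of `V`).  The theta complex `Θ(𝓗)` has as simplices the nonempty
finite subsets of `V` that are disjoint from at least one hyperedge. -/
def thetaComplex {V : Type*} (H : Set (Set V)) : Set (Finset V) :=
  {σ : Finset V | σ.Nonempty ∧ ∃ h ∈ H, ∀ v ∈ σ, v ∉ h}

/-- The geometric realization of a complex `K` of finite subsets of `V`: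
convex combinations of vertices supported on a simplex of `K`, topologized as a
subspace of `V → ℝ`. -/
def geomReal {V : Type*} (K : Set (Finset V)) : Set (V → ℝ) :=
  {f | (∀ v, 0 ≤ f v) ∧ ∃ σ ∈ K, (∀ v, f v ≠ 0 → v ∈ σ) ∧ ∑ v ∈ σ, f v = 1}

/-- The unit sphere in `ℝ^d`, i.e. the sphere `S^{d-1}` (empty when `d = 0`). -/
def sphereSpace (d : ℕ) : Set (EuclideanSpace ℝ (Fin d)) := Metric.sphere 0 1

/-- A base point on the unit sphere in `ℝ^d`, `d > 0`. -/
noncomputable def spherePt (d : ℕ) (hd : 0 < d) : ↥(sphereSpace d) :=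
  ⟨EuclideanSpace.single (⟨0, hd⟩ : Fin d) 1, by
    simp [sphereSpace, EuclideanSpace.norm_single]⟩

/-- The wedge of copies of a pointed space `(X, x₀)` indexed by `ι`:
the disjoint union with all base points identified. -/
abbrev Wedge (ι : Type*) (X : Type*) [TopologicalSpace X] (x₀ : X) : Type _ :=
  Quot (fun a b : (Σ _ : ι, X) => a.2 = x₀ ∧ b.2 = x₀)

/-- The hypergraph `CrossPoly(n,k)`: vertices are the `2n` vertices
`v_i^± = (i, ±)` of the `n`-dimensional cross-polytope, and hyperedges are the
vertex sets of its `k`-dimensional faces: the `(k+1)`-element subsets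
containing no antipodal pair. -/
def crossEdges (n k : ℕ) : Set (Set (Fin n × Bool)) :=
  {e | ∃ s : Finset (Fin n × Bool), s.card = k + 1 ∧
    (∀ i : Fin n, ¬(((i, true) ∈ s) ∧ ((i, false) ∈ s))) ∧
    e = (↑s : Set (Fin n × Bool))}

/-!
Fix the vertex `(i₀, false)`. A set of vertices is a simplex of `Θ(CrossPoly(n, k))` exactly when it
contains at most `n - k - 1` antipodal pairs, so a simplex can be joined to `(i₀, false)` unless it
contains one of the sets `B T = {(i₀, true)} ∪ T × {true, false}` with `i₀ ∉ T` and
`#T = n - k - 1`, of which there are `(n - 1).choose k`. The simplices containing no `B T` therefore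
form a cone, and collapsing this cone is a homotopy equivalence. Its complement is the disjoint
union of the open stars of the `B T`. In the star of `B T`, the differences of antipodal weights at
the indices other than `i₀` and the logarithms of their minima at the indices in `T`, both relative
to the weight at `(i₀, true)`, are global coordinates, so the star is an open ball of dimension
`(n - 1) + (n - k - 1)` and its closure becomes a sphere in the quotient.
-/

open Topology

section Collapse

variable {X Y W : Type*} [TopologicalSpace X] [TopologicalSpace Y] [TopologicalSpace W]

theorem nonempty_homotopyEquiv_of_collapse {q : C(X, W)} (hq : IsQuotientMap q) {D : Set X}
    (hqD : ∀ x y, q x = q y ↔ x = y ∨ x ∈ D ∧ y ∈ D) {f : C(X, X)}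
    (F : (ContinuousMap.id X).Homotopy f) (hFD : ∀ t, ∀ x ∈ D, F (t, x) ∈ D)
    (hf : ∀ x ∈ D, ∀ y ∈ D, f x = f y) :
    Nonempty (ContinuousMap.HomotopyEquiv X W) := by
  have hfq : Function.FactorsThrough f q := fun x y hxy => by
    rcases (hqD x y).1 hxy with rfl | ⟨hx, hy⟩
    exacts [rfl, hf x hx y hy]
  let g : C(W, X) := hq.lift f hfq
  have hg (x : X) : g (q x) = f x := DFunLike.congr_fun (hq.lift_comp f hfq) x
  let r : W → X := Function.surjInv hq.surjective
  have hr (w : W) : q (r w) = w := Function.surjInv_eq hq.surjective w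
  have hqF (t : unitInterval) (x : X) : q (F (t, r (q x))) = q (F (t, x)) := by
    rcases (hqD _ _).1 (hr (q x)) with h | ⟨hrx, hx⟩
    · rw [h]
    · exact (hqD _ _).2 (.inr ⟨hFD t _ hrx, hFD t _ hx⟩)
  let G : C(unitInterval × W, W) := ⟨fun p => q (F (p.1, r p.2)), by
    refine hq.continuous_lift_prod_right ?_
    simp only [hqF]
    exact q.continuous.comp F.continuous⟩
  have G_zero (w : W) : G (0, w) = w := by simp [G, hr]
  have G_one (w : W) : G (1, w) = q (g w) := by simp [G, ← hg, hr]
  exact ⟨⟨q, g, ⟨ContinuousMap.Homotopy.symm ⟨F, F.apply_zero, fun x => by simp [hg]⟩⟩,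
    ⟨ContinuousMap.Homotopy.symm ⟨G, G_zero, G_one⟩⟩⟩⟩

open scoped Classical in
/-- The map collapsing the complement of `U` to the point `y₀`, where `U` is identified with the
complement of `y₀`. -/
noncomputable def collapseCompl {U : Set X} {y₀ : Y} (h : U ≃ₜ ({y₀}ᶜ : Set Y)) (x : X) : Y :=
  if hx : x ∈ U then h ⟨x, hx⟩ else y₀

variable {U : Set X} {y₀ : Y} (h : U ≃ₜ ({y₀}ᶜ : Set Y))

theorem collapseCompl_of_mem {x : X} (hx : x ∈ U) : collapseCompl h x = h ⟨x, hx⟩ := dif_pos hx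

theorem collapseCompl_eq_iff {x : X} : collapseCompl h x = y₀ ↔ x ∉ U := by
  refine ⟨fun hx hxU => ?_, fun hx => dif_neg hx⟩
  exact (h ⟨x, hxU⟩).2 ((collapseCompl_of_mem h hxU).symm.trans hx)

theorem collapseCompl_symm_apply (y : ({y₀}ᶜ : Set Y)) : collapseCompl h (h.symm y) = y := by
  simp [collapseCompl_of_mem h (h.symm y).2]

theorem injOn_collapseCompl : Set.InjOn (collapseCompl h) U := fun x hx x' hx' hxx' => by
  rw [collapseCompl_of_mem h hx, collapseCompl_of_mem h hx'] at hxx'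
  exact congrArg Subtype.val (h.injective (Subtype.ext hxx'))

theorem continuous_collapseCompl [T2Space X] [CompactSpace Y] (hU : IsOpen U) :
    Continuous (collapseCompl h) := by
  refine continuous_iff_continuousAt.2 fun x => ?_
  by_cases hx : x ∈ U
  · have hon : ContinuousOn (collapseCompl h) U := by
      rw [continuousOn_iff_continuous_domRestrict]
      exact (continuous_subtype_val.comp h.continuous).congr fun u =>
        (collapseCompl_of_mem h u.2).symm
    exact hon.continuousAt (hU.mem_nhds hx)
  · rw [ContinuousAt, (collapseCompl_eq_iff h).2 hx, (nhds_basis_opens y₀).tendsto_right_iff]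
    rintro O ⟨hyO, hO⟩
    let K : Set X := (fun y => (h.symm y : X)) '' ((↑) ⁻¹' Oᶜ)
    have hK : IsCompact K := by
      refine IsCompact.image ?_ (by fun_prop)
      rw [IsInducing.subtypeVal.isCompact_preimage_iff]
      · exact hO.isClosed_compl.isCompact
      · rw [Subtype.range_coe, Set.compl_subset_compl]
        exact Set.singleton_subset_iff.2 hyO
    have hxK : x ∉ K := by
      rintro ⟨y, -, rfl⟩
      exact hx (h.symm y).2
    filter_upwards [hK.isClosed.isOpen_compl.mem_nhds hxK] with x' hx'
    by_contra hx'O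
    have hx'U : x' ∈ U := by
      by_contra hn
      exact hx'O (by rwa [(collapseCompl_eq_iff h).2 hn])
    exact hx' ⟨h ⟨x', hx'U⟩, by simpa [← collapseCompl_of_mem h hx'U] using hx'O, by simp⟩

end Collapse

section Wedge

variable {ι X Y : Type*} [TopologicalSpace X] [TopologicalSpace Y]

/-- The map from a wedge to the product of its summands that is the inclusion of the `i`-th axis
on the `i`-th summand. -/
def wedgeToPi [DecidableEq ι] (y₀ : Y) : Wedge ι Y y₀ → ι → Y :=
  Quot.lift (fun a => Function.update (fun _ => y₀) a.1 a.2) (by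
    rintro ⟨i, x⟩ ⟨j, y⟩ ⟨rfl, rfl⟩
    simp)

section

variable [DecidableEq ι] (y₀ : Y)

theorem wedgeToPi_mk (i : ι) (y : Y) :
    wedgeToPi y₀ (Quot.mk _ ⟨i, y⟩) = Function.update (fun _ => y₀) i y := rfl

theorem continuous_wedgeToPi : Continuous (wedgeToPi (ι := ι) y₀) :=
  continuous_quot_lift _ (continuous_sigma fun i => continuous_const.update i continuous_id)

theorem wedgeToPi_injective : Function.Injective (wedgeToPi (ι := ι) y₀) := by
  rintro ⟨i, x⟩ ⟨j, y⟩ h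
  rw [wedgeToPi_mk, wedgeToPi_mk] at h
  obtain rfl | hij := eq_or_ne i j
  · rw [Function.update_injective _ i h]
  · have hi := congrFun h i
    have hj := congrFun h j
    rw [Function.update_self, Function.update_of_ne hij] at hi
    rw [Function.update_self, Function.update_of_ne hij.symm] at hj
    exact Quot.sound ⟨hi, hj.symm⟩

theorem range_wedgeToPi [Nonempty ι] :
    Set.range (wedgeToPi (ι := ι) y₀) = {g | ∀ i j, g i ≠ y₀ → g j ≠ y₀ → i = j} := by
  ext g
  constructor
  · rintro ⟨⟨l, y⟩, rfl⟩ i j hi hj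
    rw [wedgeToPi_mk] at hi hj
    have eq_l {i : ι} (hi : Function.update (fun _ => y₀) l y i ≠ y₀) : i = l :=
      not_imp_comm.1 (fun hil => Function.update_of_ne hil _ _) hi
    exact (eq_l hi).trans (eq_l hj).symm
  · intro hg
    obtain ⟨i, hi⟩ : ∃ i, ∀ j ≠ i, g j = y₀ := by
      by_cases h : ∃ i, g i ≠ y₀
      · obtain ⟨i, hi⟩ := h
        exact ⟨i, fun j hji => by_contra fun hj => hji (hg j i hj hi)⟩
      · push Not at h
        exact ⟨Classical.arbitrary ι, fun j _ => h j⟩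
    refine ⟨Quot.mk _ ⟨i, g i⟩, ?_⟩
    rw [wedgeToPi_mk, Function.update_eq_iff]
    exact ⟨rfl, fun j hj => (hi j hj).symm⟩

theorem isClosedEmbedding_wedgeToPi [Finite ι] [CompactSpace Y] [T2Space Y] :
    IsClosedEmbedding (wedgeToPi (ι := ι) y₀) :=
  (continuous_wedgeToPi y₀).isClosedEmbedding (wedgeToPi_injective y₀)

end

variable {y₀ : Y} {U : ι → Set X}

theorem exists_wedgeToPi_eq_collapseCompl [DecidableEq ι] [Nonempty ι]
    (hU : Pairwise (Function.onFun Disjoint U)) (h : ∀ i, U i ≃ₜ ({y₀}ᶜ : Set Y)) (x : X) :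
    ∃ w : Wedge ι Y y₀, wedgeToPi y₀ w = fun i => collapseCompl (h i) x := by
  change (fun i => collapseCompl (h i) x) ∈ Set.range (wedgeToPi y₀)
  rw [range_wedgeToPi]
  intro i j hi hj
  rw [ne_eq, collapseCompl_eq_iff, not_not] at hi hj
  exact hU.eq (Set.not_disjoint_iff.2 ⟨x, hi, hj⟩)

theorem forall_collapseCompl_eq_iff (h : ∀ i, U i ≃ₜ ({y₀}ᶜ : Set Y)) {x x' : X} :
    (∀ i, collapseCompl (h i) x = collapseCompl (h i) x') ↔
      x = x' ∨ x ∈ (⋃ i, U i)ᶜ ∧ x' ∈ (⋃ i, U i)ᶜ := by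
  simp only [Set.mem_compl_iff, Set.mem_iUnion, not_exists]
  constructor
  · intro heq
    have mem_iff (i : ι) : x ∈ U i ↔ x' ∈ U i := by
      rw [← not_iff_not, ← collapseCompl_eq_iff (h i), heq, collapseCompl_eq_iff]
    by_cases hx : ∃ i, x ∈ U i
    · obtain ⟨i, hi⟩ := hx
      exact .inl (injOn_collapseCompl (h i) hi ((mem_iff i).1 hi) (heq i))
    · push Not at hx
      exact .inr ⟨hx, fun i hi => hx i ((mem_iff i).2 hi)⟩
  · rintro (rfl | ⟨hx, hx'⟩) i
    · rfl
    · rw [(collapseCompl_eq_iff (h i)).2 (hx i), (collapseCompl_eq_iff (h i)).2 (hx' i)]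

theorem exists_isQuotientMap_wedge [Finite ι] [Nonempty ι] [CompactSpace X] [T2Space X]
    [CompactSpace Y] [T2Space Y] (hUo : ∀ i, IsOpen (U i))
    (hUd : Pairwise (Function.onFun Disjoint U)) (hne : (⋃ i, U i)ᶜ.Nonempty)
    (h : ∀ i, U i ≃ₜ ({y₀}ᶜ : Set Y)) :
    ∃ q : C(X, Wedge ι Y y₀), IsQuotientMap q ∧
      ∀ x x', q x = q x' ↔ x = x' ∨ x ∈ (⋃ i, U i)ᶜ ∧ x' ∈ (⋃ i, U i)ᶜ := by
  classical
  have hemb := isClosedEmbedding_wedgeToPi (ι := ι) y₀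
  have : T2Space (Wedge ι Y y₀) := hemb.isEmbedding.t2Space
  choose q hq using exists_wedgeToPi_eq_collapseCompl hUd h
  have eq_iff (x : X) (w : Wedge ι Y y₀) :
      q x = w ↔ ∀ i, collapseCompl (h i) x = wedgeToPi y₀ w i := by
    rw [← hemb.injective.eq_iff, hq, funext_iff]
  have hqc : Continuous q := by
    rw [hemb.isInducing.continuous_iff]
    exact (continuous_pi fun i => continuous_collapseCompl (h i) (hUo i)).congr fun x => (hq x).symm
  have hqs : Function.Surjective q := by
    rintro ⟨i, y⟩
    simp only [eq_iff, wedgeToPi_mk]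
    by_cases hy : y = y₀
    · obtain ⟨x, hx⟩ := hne
      rw [Set.mem_compl_iff, Set.mem_iUnion, not_exists] at hx
      exact ⟨x, fun j => by simp [(collapseCompl_eq_iff (h j)).2 (hx j), hy]⟩
    · let u := (h i).symm ⟨y, hy⟩
      refine ⟨u, fun j => ?_⟩
      obtain rfl | hji := eq_or_ne j i
      · rw [Function.update_self, collapseCompl_symm_apply]
      · rw [Function.update_of_ne hji, collapseCompl_eq_iff]
        exact Set.disjoint_right.1 (hUd hji) u.2
  refine ⟨⟨q, hqc⟩, hqc.isClosedMap.isQuotientMap hqc hqs, fun x x' => ?_⟩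
  rw [ContinuousMap.coe_mk, eq_iff, hq, forall_collapseCompl_eq_iff]

end Wedge

theorem nonempty_homeomorph_sphere_compl {E F : Type*} [NormedAddCommGroup E]
    [InnerProductSpace ℝ E] [AddCommGroup F] [Module ℝ F]
    [TopologicalSpace F] [IsTopologicalAddGroup F] [ContinuousSMul ℝ F] [T2Space F]
    [FiniteDimensional ℝ F] (y₀ : Metric.sphere (0 : E) 1)
    (hd : Module.finrank ℝ E = Module.finrank ℝ F + 1) :
    Nonempty (F ≃ₜ ({y₀}ᶜ : Set (Metric.sphere (0 : E) 1))) := by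
  have : Fact (Module.finrank ℝ E = Module.finrank ℝ F + 1) := ⟨hd⟩
  let e := stereographic' (Module.finrank ℝ F) y₀
  have e₁ := e.toHomeomorphSourceTarget
  rw [stereographic'_source, stereographic'_target] at e₁
  have e₂ : F ≃L[ℝ] EuclideanSpace ℝ (Fin (Module.finrank ℝ F)) :=
    ContinuousLinearEquiv.ofFinrankEq (by simp)
  exact ⟨e₂.toHomeomorph.trans ((Homeomorph.Set.univ _).symm.trans e₁.symm)⟩

section GeomReal

open Finset

variable {ι V : Type*}

/-- The open star of a simplex in a geometric realization. -/
def openStar (K : Set (Finset V)) (τ : Finset V) : Set (geomReal K) :=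
  {f | ∀ v ∈ τ, 0 < f.1 v}

theorem pos_of_mem_geomReal {K : Set (Finset V)} {f : V → ℝ} (hf : f ∈ geomReal K) : 0 < f := by
  refine lt_of_le_of_ne hf.1 ?_
  rintro rfl
  obtain ⟨-, σ, -, -, hsum⟩ := hf
  simp at hsum

theorem isOpen_openStar (K : Set (Finset V)) (τ : Finset V) : IsOpen (openStar K τ) := by
  simp only [openStar, Set.ofPred_forall]
  exact isOpen_biInter_finset fun v _ =>
    isOpen_lt continuous_const ((continuous_apply v).comp continuous_subtype_val)

theorem disjoint_openStar [DecidableEq V] {K : Set (Finset V)}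
    (hK : IsRelLowerSet K Finset.Nonempty) {σ τ : Finset V} (hσ : σ.Nonempty) (hστ : σ ∪ τ ∉ K) :
    Disjoint (openStar K σ) (openStar K τ) := by
  refine Set.disjoint_left.2 fun f hfσ hfτ => hστ ?_
  obtain ⟨-, ρ, hρ, hfρ, -⟩ := f.2
  refine hK.mem_of_le hρ (union_subset ?_ ?_) (hσ.mono subset_union_left)
  exacts [fun v hv => hfρ v (hfσ v hv).ne', fun v hv => hfρ v (hfτ v hv).ne']

section Depth

variable [Fintype ι] [Nonempty ι] {B : ι → Finset V} (hB : ∀ i, (B i).Nonempty)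

/-- The largest number bounding below the values of `f` on one of the simplices `B i`. For `0 ≤ f`
it vanishes exactly when `f` lies outside the open stars of all the `B i`. -/
noncomputable def starDepth (f : V → ℝ) : ℝ :=
  univ.sup' univ_nonempty fun i => (B i).inf' (hB i) f

theorem continuous_starDepth : Continuous (starDepth hB) :=
  Continuous.finset_sup'_apply _ fun i _ =>
    Continuous.finset_inf'_apply (hB i) fun v _ => continuous_apply v

variable {f : V → ℝ} {t : ℝ}

theorem starDepth_lt_iff : starDepth hB f < t ↔ ∀ i, ∃ v ∈ B i, f v < t := by
  simp [starDepth]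

theorem starDepth_le_iff : starDepth hB f ≤ t ↔ ∀ i, ∃ v ∈ B i, f v ≤ t := by
  simp [starDepth]

theorem starDepth_nonneg (hf : 0 ≤ f) : 0 ≤ starDepth hB f := by
  by_contra! hneg
  obtain ⟨v, -, hv⟩ := (starDepth_lt_iff hB).1 hneg (Classical.arbitrary ι)
  exact hv.not_ge (hf v)

theorem starDepth_le_norm [Fintype V] (f : V → ℝ) : starDepth hB f ≤ ‖f‖ :=
  (starDepth_le_iff hB).2 fun i =>
    (hB i).imp fun v hv => ⟨hv, (le_abs_self _).trans (norm_le_pi_norm f v)⟩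

theorem mem_compl_iUnion_openStar_iff {K : Set (Finset V)} {f : geomReal K} :
    f ∈ (⋃ i, openStar K (B i))ᶜ ↔ starDepth hB f.1 = 0 := by
  rw [← (starDepth_nonneg hB f.2.1).ge_iff_eq', starDepth_le_iff]
  simp [openStar]

variable [DecidableEq V] {a : V}

/-- Every weight is lowered at unit speed, stopping at zero, and once the weights have left the open
stars of the `B i`, the weight of `a` is raised at unit speed. -/
noncomputable def pushToApex (a : V) (t : ℝ) (f : V → ℝ) : V → ℝ :=
  fun v => (f v - t)⁺ + if v = a then (t - starDepth hB f)⁺ else 0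

theorem continuous_pushToApex :
    Continuous fun p : ℝ × (V → ℝ) => pushToApex hB a p.1 p.2 := by
  have := continuous_starDepth hB
  refine continuous_pi fun v => ?_
  simp only [pushToApex, posPart_def]
  split_ifs <;> fun_prop

theorem pushToApex_zero (hf : 0 ≤ f) : pushToApex hB a 0 f = f := by
  ext v
  have hv : 0 ≤ f v := hf v
  simp [pushToApex, starDepth_nonneg hB hf, hv]

theorem pushToApex_norm [Fintype V] (hf : starDepth hB f = 0) :
    pushToApex hB a ‖f‖ f = Pi.single a ‖f‖ := by
  ext v
  simp [pushToApex, hf, (le_abs_self _).trans (norm_le_pi_norm f v), Pi.single_apply]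

theorem pushToApex_of_le {v : V} (hv : v ≠ a) (hft : f v ≤ t) : pushToApex hB a t f v = 0 := by
  simp [pushToApex, hv, hft]

theorem pushToApex_pos [Fintype V] (hf : 0 < f) (ht : 0 ≤ t) (htf : t ≤ ‖f‖ - starDepth hB f) :
    0 < pushToApex hB a t f := by
  refine Pi.lt_def.2 ⟨fun v => add_nonneg (posPart_nonneg _) (by positivity), ?_⟩
  rcases lt_or_ge t ‖f‖ with h | h
  · obtain ⟨v, hv⟩ : ∃ v, t < f v := by
      contrapose! h
      exact (pi_norm_le_iff_of_nonneg ht).2 fun v => by simpa [abs_of_nonneg (hf.le v)] using h v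
    exact ⟨v, add_pos_of_pos_of_nonneg (posPart_pos (sub_pos.2 hv)) (by positivity)⟩
  · have norm_pos : 0 < ‖f‖ := norm_pos_iff.2 hf.ne'
    have depth_lt : starDepth hB f < t := by linarith
    exact ⟨a, add_pos_of_nonneg_of_pos (posPart_nonneg _) (by simpa using depth_lt)⟩

theorem exists_support_pushToApex_subset [Finite V] {K : Set (Finset V)}
    (hK : IsRelLowerSet K Finset.Nonempty)
    (hcone : ∀ σ ∈ insert ∅ K, (∀ i, ¬ B i ⊆ σ) → insert a σ ∈ K) (ht : 0 ≤ t)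
    (hf : ∃ σ ∈ K, Function.support f ⊆ σ) :
    ∃ τ ∈ K, Function.support (pushToApex hB a t f) ⊆ τ := by
  have : Fintype V := Fintype.ofFinite V
  obtain ⟨σ, hσK, hσ⟩ := hf
  rcases le_or_gt t (starDepth hB f) with hlow | hhigh
  · refine ⟨σ, hσK, fun v hv => ?_⟩
    contrapose! hv
    have hfv : f v = 0 := Function.notMem_support.1 fun h => hv (hσ h)
    simp [pushToApex, hfv, ht, hlow]
  · let τ : Finset V := {v | t < f v}
    have hτσ : τ ⊆ σ := fun v hv => hσ (ht.trans_lt (by simpa [τ] using hv)).ne'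
    have hτK : τ ∈ insert ∅ K :=
      τ.eq_empty_or_nonempty.imp id fun hτ => hK.mem_of_le hσK hτσ hτ
    refine ⟨insert a τ, hcone τ hτK fun i hi => ?_, fun v hv => ?_⟩
    · obtain ⟨v, hvB, hv⟩ := (starDepth_lt_iff hB).1 hhigh i
      exact hv.not_gt (by simpa [τ] using hi hvB)
    · by_contra hvτ
      simp only [coe_insert, Set.mem_insert_iff, not_or, τ, coe_filter, mem_univ, true_and] at hvτ
      exact hv (pushToApex_of_le hB hvτ.1 (not_lt.1 hvτ.2))

end Depth

section Fintype

variable [Fintype V]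

theorem mem_geomReal_iff {K : Set (Finset V)} {f : V → ℝ} :
    f ∈ geomReal K ↔ f ∈ stdSimplex ℝ V ∧ ∃ σ ∈ K, Function.support f ⊆ σ := by
  have sum_eq {σ : Finset V} (hσ : Function.support f ⊆ σ) : ∑ v ∈ σ, f v = ∑ v, f v :=
    sum_subset (subset_univ σ) fun v _ hv => Function.notMem_support.1 fun h => hv (hσ h)
  constructor
  · rintro ⟨hf, σ, hσK, hσ, hsum⟩
    exact ⟨⟨hf, (sum_eq hσ).symm.trans hsum⟩, σ, hσK, hσ⟩
  · rintro ⟨⟨hf, hsum⟩, σ, hσK, hσ⟩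
    exact ⟨hf, σ, hσK, hσ, (sum_eq hσ).trans hsum⟩

/-- Rescaling of a weight function to total mass one; it is junk when the total mass vanishes. -/
noncomputable def unitMass (g : V → ℝ) : V → ℝ := (∑ v, g v)⁻¹ • g

variable {g : V → ℝ}

theorem unitMass_of_mem_stdSimplex (hg : g ∈ stdSimplex ℝ V) : unitMass g = g := by
  simp [unitMass, hg.2]

theorem unitMass_smul {c : ℝ} (hc : c ≠ 0) (g : V → ℝ) : unitMass (c • g) = unitMass g := by
  simp only [unitMass, Pi.smul_apply, ← smul_sum, smul_smul]
  congr 1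
  simp [mul_comm, hc]

theorem unitMass_mem_geomReal {K : Set (Finset V)} (hg : 0 < g)
    (hgK : ∃ σ ∈ K, Function.support g ⊆ σ) : unitMass g ∈ geomReal K := by
  have hpos : 0 < ∑ v, g v := Fintype.sum_pos hg
  obtain ⟨σ, hσK, hσ⟩ := hgK
  refine mem_geomReal_iff.2 ⟨⟨fun v => mul_nonneg (inv_nonneg.2 hpos.le) (hg.le v), ?_⟩, σ,
    hσK, (Function.support_const_smul_subset _ _).trans hσ⟩
  simp only [unitMass, Pi.smul_apply, ← smul_sum]
  exact inv_mul_cancel₀ hpos.ne'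

theorem continuous_unitMass_comp {Z : Type*} [TopologicalSpace Z] {g : Z → V → ℝ}
    (hg : Continuous g) (hg_pos : ∀ z, 0 < g z) : Continuous fun z => unitMass (g z) :=
  (Continuous.inv₀ (by fun_prop) fun z => (Fintype.sum_pos (hg_pos z)).ne').smul hg

end Fintype

theorem isCompact_geomReal [Finite V] (K : Set (Finset V)) : IsCompact (geomReal K) := by
  have : Fintype V := Fintype.ofFinite V
  have hK : geomReal K = stdSimplex ℝ V ∩ ⋃ σ ∈ K, ⋂ v ∈ {v | v ∉ σ}, {f | f v = 0} := by
    ext f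
    simp only [mem_geomReal_iff, Function.support_subset_iff', Set.mem_inter_iff, Set.mem_iUnion,
      Set.mem_iInter, Set.mem_ofPred_eq, mem_coe, exists_prop]
  rw [hK]
  exact (isCompact_stdSimplex ℝ V).inter_right <| K.toFinite.isClosed_biUnion fun σ _ =>
    isClosed_biInter fun v _ => isClosed_eq (continuous_apply v) continuous_const

section ConeCollapse

variable [Finite V] [DecidableEq V] [Finite ι] [Nonempty ι] {K : Set (Finset V)}
  {B : ι → Finset V} {a : V}

theorem exists_homotopy_compl_iUnion_openStar (hK : IsRelLowerSet K Finset.Nonempty)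
    (hB : ∀ i, (B i).Nonempty) (haB : ∀ i, a ∉ B i)
    (hcone : ∀ σ ∈ insert ∅ K, (∀ i, ¬ B i ⊆ σ) → insert a σ ∈ K) :
    ∃ (r : C(geomReal K, geomReal K)) (F : (ContinuousMap.id (geomReal K)).Homotopy r),
      (∀ t, ∀ f ∈ (⋃ i, openStar K (B i))ᶜ, F (t, f) ∈ (⋃ i, openStar K (B i))ᶜ) ∧
      ∀ f ∈ (⋃ i, openStar K (B i))ᶜ, ∀ g ∈ (⋃ i, openStar K (B i))ᶜ, r f = r g := by
  have : Fintype V := Fintype.ofFinite V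
  have : Fintype ι := Fintype.ofFinite ι
  simp only [mem_compl_iUnion_openStar_iff hB]
  -- The factor `‖f‖ - starDepth f` is at most the time `‖f‖` at which all weights have been lowered
  -- to zero, with equality only for `f` in the cone, where `a` is raised from time `0` on.
  let time (p : unitInterval × geomReal K) : ℝ := p.1 * (‖p.2.1‖ - starDepth hB p.2.1)
  let g (p : unitInterval × geomReal K) : V → ℝ := pushToApex hB a (time p) p.2.1
  have time_nonneg (p) : 0 ≤ time p :=
    mul_nonneg p.1.2.1 (sub_nonneg.2 (starDepth_le_norm hB _))
  have g_pos (p) : 0 < g p :=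
    pushToApex_pos hB (pos_of_mem_geomReal p.2.2) (time_nonneg p) <|
      mul_le_of_le_one_left (sub_nonneg.2 (starDepth_le_norm hB _)) p.1.2.2
  have g_continuous : Continuous g := by
    have := continuous_starDepth hB
    exact (continuous_pushToApex hB).comp (by fun_prop : Continuous fun p => (time p, p.2.1))
  have F_mem (p) : unitMass (g p) ∈ geomReal K :=
    unitMass_mem_geomReal (g_pos p) <|
      exists_support_pushToApex_subset hB hK hcone (time_nonneg p) (mem_geomReal_iff.1 p.2.2).2
  let F : C(unitInterval × geomReal K, geomReal K) := ⟨fun p => ⟨unitMass (g p), F_mem p⟩,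
    (continuous_unitMass_comp g_continuous g_pos).subtype_mk _⟩
  have F_zero (f) : F (0, f) = f := Subtype.ext <| by
    simp [F, g, time, pushToApex_zero hB f.2.1,
      unitMass_of_mem_stdSimplex (mem_geomReal_iff.1 f.2).1]
  refine ⟨F.comp (.prodMk (.const _ 1) (.id _)), ⟨F, F_zero, fun f => rfl⟩, fun t f hf => ?_,
    fun f hf f' hf' => Subtype.ext ?_⟩
  · refine le_antisymm ((starDepth_le_iff hB).2 fun i => ?_) (starDepth_nonneg hB (F (t, f)).2.1)
    obtain ⟨v, hvB, hv⟩ := (starDepth_le_iff hB).1 hf.le i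
    have hva : v ≠ a := ne_of_mem_of_not_mem hvB (haB i)
    have hgv : g (t, f) v = 0 := pushToApex_of_le hB hva (hv.trans (time_nonneg _))
    exact ⟨v, hvB, (mul_eq_zero_of_right _ hgv).le⟩
  · have F_one {f : geomReal K} (hf : starDepth hB f.1 = 0) :
        (F (1, f)).1 = unitMass (Pi.single a 1) := by
      have norm_ne_zero : ‖f.1‖ ≠ 0 := norm_ne_zero_iff.2 (pos_of_mem_geomReal f.2).ne'
      simp [F, g, time, hf, pushToApex_norm, ← unitMass_smul norm_ne_zero (Pi.single a 1),
        ← Pi.single_smul]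
    exact (F_one hf).trans (F_one hf').symm

theorem nonempty_homotopyEquiv_wedge_of_openStar {Y : Type*} [TopologicalSpace Y] [CompactSpace Y]
    [T2Space Y] {y₀ : Y} (hK : IsRelLowerSet K Finset.Nonempty)
    (hB : ∀ i, (B i).Nonempty) (haB : ∀ i, a ∉ B i)
    (hcone : ∀ σ ∈ insert ∅ K, (∀ i, ¬ B i ⊆ σ) → insert a σ ∈ K)
    (hBB : Pairwise fun i j => B i ∪ B j ∉ K) (h : ∀ i, openStar K (B i) ≃ₜ ({y₀}ᶜ : Set Y)) :
    Nonempty (ContinuousMap.HomotopyEquiv (geomReal K) (Wedge ι Y y₀)) := by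
  have : Fintype V := Fintype.ofFinite V
  have : CompactSpace (geomReal K) := isCompact_iff_compactSpace.1 (isCompact_geomReal K)
  have haK : {a} ∈ K := by
    simpa using hcone ∅ (Set.mem_insert _ _) fun i => by simpa using (hB i).ne_empty
  have apex_mem : Pi.single a 1 ∈ geomReal K :=
    mem_geomReal_iff.2 ⟨single_mem_stdSimplex ℝ a, {a}, haK, by simp⟩
  have hD : (⋃ i, openStar K (B i))ᶜ.Nonempty := by
    refine ⟨⟨_, apex_mem⟩, ?_⟩
    simp only [Set.mem_compl_iff, Set.mem_iUnion, not_exists]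
    intro i hi
    obtain ⟨v, hv⟩ := hB i
    exact (hi v hv).ne' (Pi.single_eq_of_ne (ne_of_mem_of_not_mem hv (haB i)) 1)
  obtain ⟨q, hq, hqD⟩ := exists_isQuotientMap_wedge (fun i => isOpen_openStar K (B i))
    (fun i j hij => disjoint_openStar hK (hB i) (hBB hij)) hD h
  obtain ⟨r, F, hFD, hr⟩ := exists_homotopy_compl_iUnion_openStar hK hB haB hcone
  exact nonempty_homotopyEquiv_of_collapse hq hqD F hFD hr

end ConeCollapse

end GeomReal

section CrossPolytope

open Finset

variable {n k : ℕ}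

/-- The indices of the antipodal pairs of vertices of the cross-polytope contained in `σ`. -/
def antipodalPairs (σ : Finset (Fin n × Bool)) : Finset (Fin n) := {i | ∀ b, (i, b) ∈ σ}

theorem mem_antipodalPairs {σ : Finset (Fin n × Bool)} {i : Fin n} :
    i ∈ antipodalPairs σ ↔ ∀ b, (i, b) ∈ σ := by
  simp [antipodalPairs]

theorem mem_thetaComplex_crossEdges {σ : Finset (Fin n × Bool)} :
    σ ∈ thetaComplex (crossEdges n k) ↔ σ.Nonempty ∧ #(antipodalPairs σ) + k < n := by
  refine and_congr_right fun _ => ⟨?_, fun hcard => ?_⟩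
  · rintro ⟨_, ⟨s, hs, hanti, rfl⟩, hσ⟩
    have hcard : #(s.image Prod.fst) = k + 1 := by
      rw [card_image_of_injOn, hs]
      rintro ⟨i, b⟩ hi ⟨j, c⟩ hj (rfl : i = j)
      have := hanti i
      cases b <;> cases c <;> simp_all
    have hdisj : Disjoint (antipodalPairs σ) (s.image Prod.fst) := by
      refine disjoint_right.2 fun i hi hi' => ?_
      obtain ⟨⟨j, b⟩, hj, rfl⟩ := mem_image.1 hi
      exact hσ _ (mem_antipodalPairs.1 hi' b) hj
    have := card_le_univ (antipodalPairs σ ∪ s.image Prod.fst)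
    rw [card_union_of_disjoint hdisj, hcard, Fintype.card_fin] at this
    omega
  · have hcompl : k + 1 ≤ #(antipodalPairs σ)ᶜ := by
      rw [card_compl, Fintype.card_fin]
      omega
    obtain ⟨A, hA, hAcard⟩ := exists_subset_card_eq hcompl
    have exists_notMem (i : Fin n) (hi : i ∈ A) : ∃ b, (i, b) ∉ σ := by
      simpa only [mem_compl, mem_antipodalPairs, not_forall] using hA hi
    choose! b hb using exists_notMem
    let c (i : Fin n) : Fin n × Bool := (i, b i)
    have c_injective : Function.Injective c := fun i j hij => congrArg Prod.fst hij
    refine ⟨_, ⟨A.image c, by rw [card_image_of_injective _ c_injective, hAcard], ?_, rfl⟩, ?_⟩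
    · rintro i ⟨hi, hi'⟩
      simp only [c, mem_image, Prod.mk.injEq] at hi hi'
      grind
    · rintro _ hσ hc
      obtain ⟨i, hi, rfl⟩ := mem_image.1 (mem_coe.1 hc)
      exact hb i hi hσ

theorem isRelLowerSet_thetaComplex {V : Type*} (H : Set (Set V)) :
    IsRelLowerSet (thetaComplex H) Finset.Nonempty := by
  rintro σ ⟨hσ, h, hH, hσh⟩
  exact ⟨hσ, fun τ hτσ hτ => ⟨hτ, h, hH, fun v hv => hσh v (hτσ hv)⟩⟩

/-- The vertex `(i₀, true)` and the antipodal pairs over `T`: for `i₀ ∉ T`, a minimal set whose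
union with the vertex `(i₀, false)` contains `#T + 1` antipodal pairs. -/
def pairBlock (i₀ : Fin n) (T : Finset (Fin n)) : Finset (Fin n × Bool) :=
  insert (i₀, true) (T ×ˢ univ)

variable {i₀ : Fin n} {T : Finset (Fin n)}

theorem subset_antipodalPairs {σ : Finset (Fin n × Bool)} (h : pairBlock i₀ T ⊆ σ) :
    T ⊆ antipodalPairs σ := fun _ hi =>
  mem_antipodalPairs.2 fun b => h <| mem_insert_of_mem <| mk_mem_product hi (mem_univ b)

theorem pairBlock_union_notMem_thetaComplex {S : Finset (Fin n)} (hT : #T + k + 1 = n)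
    (hTS : #T = #S) (hne : T ≠ S) :
    pairBlock i₀ T ∪ pairBlock i₀ S ∉ thetaComplex (crossEdges n k) := by
  rw [mem_thetaComplex_crossEdges, not_and, not_lt]
  intro _
  have hTU : T ∪ S ⊆ antipodalPairs (pairBlock i₀ T ∪ pairBlock i₀ S) :=
    union_subset (subset_antipodalPairs subset_union_left)
      (subset_antipodalPairs subset_union_right)
  have hlt : #T < #(T ∪ S) := card_lt_card <| subset_union_left.ssubset_of_ne fun h =>
    hne (eq_of_subset_of_card_le (union_eq_left.1 h.symm) hTS.le).symm
  have := card_le_card hTU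
  omega

theorem insert_mem_thetaComplex_of_forall_not_pairBlock_subset {σ : Finset (Fin n × Bool)}
    (hσ : #(antipodalPairs σ) + k < n)
    (hT : ∀ T : Finset (Fin n), i₀ ∉ T → #T + k + 1 = n → ¬ pairBlock i₀ T ⊆ σ) :
    insert (i₀, false) σ ∈ thetaComplex (crossEdges n k) := by
  refine mem_thetaComplex_crossEdges.2 ⟨insert_nonempty _ _, ?_⟩
  by_contra! hcard
  set P := antipodalPairs (insert (i₀, false) σ)
  have mem_of_mem_P {i : Fin n} (hi : i ∈ P) {b : Bool} (hib : (i, b) ≠ (i₀, false)) :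
      (i, b) ∈ σ :=
    mem_of_mem_insert_of_ne (mem_antipodalPairs.1 hi b) hib
  have hP : P.erase i₀ ⊆ antipodalPairs σ := fun i hi => mem_antipodalPairs.2 fun b =>
    mem_of_mem_P (mem_of_mem_erase hi) (by simp [ne_of_mem_erase hi])
  have hi₀ : i₀ ∈ P := by
    by_contra hn
    rw [erase_eq_of_notMem hn] at hP
    have := card_le_card hP
    omega
  have hk : n - k - 1 ≤ #(P.erase i₀) := by
    rw [card_erase_of_mem hi₀]
    omega
  obtain ⟨T, hTP, hTcard⟩ := exists_subset_card_eq hk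
  refine hT T (fun h => notMem_erase _ _ (hTP h)) (by omega) (insert_subset ?_ ?_)
  · exact mem_of_mem_P hi₀ (by simp)
  · rintro ⟨i, b⟩ hi
    exact mem_antipodalPairs.1 (hP (hTP (mem_product.1 hi).1)) b

/-- Coordinates on the open star of `pairBlock i₀ T`: one for the difference of the two weights at
each index `i ≠ i₀`, one for their minimum at each `i ∈ T`, relative to the weight at
`(i₀, true)`. -/
abbrev StarCoord (i₀ : Fin n) (T : Finset (Fin n)) : Type :=
  ({i // i ≠ i₀} → ℝ) × (T → ℝ)

theorem finrank_starCoord (i₀ : Fin n) (T : Finset (Fin n)) :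
    Module.finrank ℝ (StarCoord i₀ T) = n - 1 + #T := by
  simp [StarCoord]

/-- The coordinates of a weight function. The minima are positive and enter through their
logarithm. -/
noncomputable def starCoord (i₀ : Fin n) (T : Finset (Fin n)) (f : Fin n × Bool → ℝ) :
    StarCoord i₀ T :=
  (fun i => (f (i, true) - f (i, false)) / f (i₀, true),
    fun i => Real.log (min (f (i, true)) (f (i, false)) / f (i₀, true)))

theorem starCoord_smul {c : ℝ} (hc : 0 < c) (f : Fin n × Bool → ℝ) :
    starCoord i₀ T (c • f) = starCoord i₀ T f := by
  simp only [starCoord, Pi.smul_apply, smul_eq_mul, ← mul_sub, ← mul_min_of_nonneg _ _ hc.le,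
    mul_div_mul_left _ _ hc.ne']

/-- The differences of antipodal weights prescribed by coordinates, normalized to `1` at `i₀`. -/
def coordDiff (x : StarCoord i₀ T) (i : Fin n) : ℝ :=
  if h : i = i₀ then 1 else x.1 ⟨i, h⟩

/-- The minima of antipodal weights prescribed by coordinates. -/
noncomputable def coordMin (x : StarCoord i₀ T) (i : Fin n) : ℝ :=
  if h : i ∈ T then Real.exp (x.2 ⟨i, h⟩) else 0

/-- The weight function with weight `1` at `(i₀, true)` and given coordinates. -/
noncomputable def ofStarCoord (x : StarCoord i₀ T) : Fin n × Bool → ℝ :=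
  fun p => (if p.2 then (coordDiff x p.1)⁺ else (coordDiff x p.1)⁻) + coordMin x p.1

theorem continuous_ofStarCoord : Continuous (ofStarCoord : StarCoord i₀ T → Fin n × Bool → ℝ) := by
  refine continuous_pi fun p => ?_
  simp only [ofStarCoord, coordDiff, coordMin, posPart_def, negPart_def]
  split_ifs <;> fun_prop

theorem coordMin_nonneg (x : StarCoord i₀ T) (i : Fin n) : 0 ≤ coordMin x i := by
  rw [coordMin]
  split_ifs <;> positivity

theorem ofStarCoord_sub (x : StarCoord i₀ T) (i : Fin n) :
    ofStarCoord x (i, true) - ofStarCoord x (i, false) = coordDiff x i := by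
  simp [ofStarCoord]

theorem min_ofStarCoord (x : StarCoord i₀ T) (i : Fin n) :
    min (ofStarCoord x (i, true)) (ofStarCoord x (i, false)) = coordMin x i := by
  simp [ofStarCoord, min_add_add_right, posPart_inf_negPart_eq_zero]

theorem ofStarCoord_apply_base (hi₀ : i₀ ∉ T) (x : StarCoord i₀ T) :
    ofStarCoord x (i₀, true) = 1 := by
  simp [ofStarCoord, coordDiff, coordMin, hi₀]

theorem ofStarCoord_pos (hi₀ : i₀ ∉ T) (x : StarCoord i₀ T) : 0 < ofStarCoord x := by
  refine Pi.lt_def.2 ⟨fun p => add_nonneg ?_ (coordMin_nonneg x _), (i₀, true), ?_⟩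
  · split_ifs <;> positivity
  · simp [ofStarCoord_apply_base hi₀]

theorem starCoord_ofStarCoord (hi₀ : i₀ ∉ T) (x : StarCoord i₀ T) :
    starCoord i₀ T (ofStarCoord x) = x := by
  ext i <;> simp [starCoord, ofStarCoord_sub, min_ofStarCoord, ofStarCoord_apply_base hi₀,
    coordDiff, coordMin, i.2]

theorem ofStarCoord_starCoord {f : Fin n × Bool → ℝ} (hi₀ : i₀ ∉ T) (hf₀ : 0 < f (i₀, true))
    (hpos : ∀ i ∈ T, 0 < min (f (i, true)) (f (i, false)))
    (hzero : ∀ i ∉ T, min (f (i, true)) (f (i, false)) = 0) :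
    ofStarCoord (starCoord i₀ T f) = (f (i₀, true))⁻¹ • f := by
  have coordDiff_eq (i : Fin n) :
      coordDiff (starCoord i₀ T f) i = (f (i, true) - f (i, false)) / f (i₀, true) := by
    obtain rfl | hi := eq_or_ne i i₀
    · have hfalse : f (i, false) = 0 :=
        ((min_choice _ _).resolve_left ((hzero i hi₀).trans_ne hf₀.ne)).symm.trans (hzero i hi₀)
      simp [coordDiff, hfalse, hf₀.ne']
    · simp [coordDiff, starCoord, hi]
  have coordMin_eq (i : Fin n) :
      coordMin (starCoord i₀ T f) i = min (f (i, true)) (f (i, false)) / f (i₀, true) := by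
    by_cases hi : i ∈ T
    · simp only [coordMin, hi, starCoord, dite_true]
      exact Real.exp_log (div_pos (hpos i hi) hf₀)
    · simp [coordMin, hi, hzero]
  ext ⟨i, b⟩
  simp only [ofStarCoord, coordDiff_eq, coordMin_eq, Pi.smul_apply, smul_eq_mul]
  rcases le_total (f (i, true)) (f (i, false)) with h | h
  · have hdiff : (f (i, true) - f (i, false)) / f (i₀, true) ≤ 0 :=
      div_nonpos_of_nonpos_of_nonneg (sub_nonpos.2 h) hf₀.le
    cases b <;> simp [h, posPart_of_nonpos hdiff, negPart_of_nonpos hdiff] <;> ring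
  · have hdiff : 0 ≤ (f (i, true) - f (i, false)) / f (i₀, true) :=
      div_nonneg (sub_nonneg.2 h) hf₀.le
    cases b <;> simp [h, posPart_of_nonneg hdiff, negPart_of_nonneg hdiff] <;> ring

theorem unitMass_ofStarCoord_mem (hi₀ : i₀ ∉ T) (hT : #T + k < n) (x : StarCoord i₀ T) :
    unitMass (ofStarCoord x) ∈ geomReal (thetaComplex (crossEdges n k)) := by
  let σ : Finset (Fin n × Bool) := {p | ofStarCoord x p ≠ 0}
  have hσT : antipodalPairs σ ⊆ T := fun i hi => by
    by_contra hiT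
    have hmin : min (ofStarCoord x (i, true)) (ofStarCoord x (i, false)) = 0 := by
      simp [min_ofStarCoord, coordMin, hiT]
    simp only [mem_antipodalPairs, σ, mem_filter_univ] at hi
    rcases min_choice (ofStarCoord x (i, true)) (ofStarCoord x (i, false)) with h | h
    exacts [hi true (h.symm.trans hmin), hi false (h.symm.trans hmin)]
  have hσ : σ ∈ thetaComplex (crossEdges n k) :=
    mem_thetaComplex_crossEdges.2 ⟨⟨(i₀, true), by simp [σ, ofStarCoord_apply_base hi₀]⟩,
      (Nat.add_le_add_right (card_le_card hσT) k).trans_lt hT⟩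
  exact unitMass_mem_geomReal (ofStarCoord_pos hi₀ x) ⟨σ, hσ, fun p hp => by simpa [σ] using hp⟩

theorem unitMass_ofStarCoord_pos (hi₀ : i₀ ∉ T) (x : StarCoord i₀ T) {p : Fin n × Bool}
    (hp : p ∈ pairBlock i₀ T) : 0 < unitMass (ofStarCoord x) p := by
  refine mul_pos (inv_pos.2 (Fintype.sum_pos (ofStarCoord_pos hi₀ x))) ?_
  obtain rfl | hpT := mem_insert.1 hp
  · simp [ofStarCoord_apply_base hi₀]
  · refine add_pos_of_nonneg_of_pos (by split_ifs <;> positivity) ?_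
    rw [coordMin, dif_pos (mem_product.1 hpT).1]
    positivity

theorem min_pos_of_mem_openStar {K : Set (Finset (Fin n × Bool))} {f : geomReal K}
    (hf : f ∈ openStar K (pairBlock i₀ T)) {i : Fin n} (hi : i ∈ T) :
    0 < min (f.1 (i, true)) (f.1 (i, false)) := by
  have hmem (b : Bool) : (i, b) ∈ pairBlock i₀ T :=
    mem_insert_of_mem (mk_mem_product hi (mem_univ b))
  exact lt_min (hf _ (hmem true)) (hf _ (hmem false))

theorem min_eq_zero_of_mem_openStar (hT : #T + k + 1 = n)
    {f : geomReal (thetaComplex (crossEdges n k))} (hf : f ∈ openStar _ (pairBlock i₀ T))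
    {i : Fin n} (hi : i ∉ T) : min (f.1 (i, true)) (f.1 (i, false)) = 0 := by
  obtain ⟨-, σ, hσ, hfσ⟩ := mem_geomReal_iff.1 f.2
  have hTσ : T ⊆ antipodalPairs σ := subset_antipodalPairs fun v hv => hfσ (hf v hv).ne'
  by_contra hne
  have hmin := (le_min (f.2.1 (i, true)) (f.2.1 (i, false))).lt_of_ne' hne
  have hiσ : i ∈ antipodalPairs σ := mem_antipodalPairs.2 fun b => hfσ <| ne_of_gt <| by
    cases b
    exacts [(lt_min_iff.1 hmin).2, (lt_min_iff.1 hmin).1]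
  have hcard := card_le_card (insert_subset hiσ hTσ)
  rw [card_insert_of_notMem hi] at hcard
  have := (mem_thetaComplex_crossEdges.1 hσ).2
  omega

theorem continuous_starCoord_openStar (K : Set (Finset (Fin n × Bool))) :
    Continuous fun f : openStar K (pairBlock i₀ T) => starCoord i₀ T f.1.1 := by
  have base_ne_zero (f : openStar K (pairBlock i₀ T)) : f.1.1 (i₀, true) ≠ 0 :=
    (f.2 _ (mem_insert_self _ _)).ne'
  have eval (p : Fin n × Bool) : Continuous fun f : openStar K (pairBlock i₀ T) => f.1.1 p :=
    (continuous_apply p).comp (continuous_subtype_val.comp continuous_subtype_val)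
  refine .prodMk ?_ ?_ <;> refine continuous_pi fun i => ?_
  · exact ((eval _).sub (eval _)).div (eval _) base_ne_zero
  · exact (((eval _).min (eval _)).div (eval _) base_ne_zero).log fun f =>
      div_ne_zero (min_pos_of_mem_openStar f.2 i.2).ne' (base_ne_zero f)

/-- The open star of `pairBlock i₀ T` in `Θ(CrossPoly(n, k))` is an open ball when `T` has as many
elements as a simplex can have antipodal pairs. -/
noncomputable def openStarHomeomorph (hi₀ : i₀ ∉ T) (hT : #T + k + 1 = n) :
    openStar (thetaComplex (crossEdges n k)) (pairBlock i₀ T) ≃ₜ StarCoord i₀ T where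
  toFun f := starCoord i₀ T f.1.1
  invFun x := ⟨⟨unitMass (ofStarCoord x), unitMass_ofStarCoord_mem hi₀ (by omega) x⟩,
    fun _ => unitMass_ofStarCoord_pos hi₀ x⟩
  left_inv f := by
    have hf₀ : 0 < f.1.1 (i₀, true) := f.2 _ (mem_insert_self _ _)
    refine Subtype.ext (Subtype.ext ?_)
    dsimp only
    rw [ofStarCoord_starCoord hi₀ hf₀ (fun i => min_pos_of_mem_openStar f.2)
      (fun i => min_eq_zero_of_mem_openStar hT f.2), unitMass_smul (inv_ne_zero hf₀.ne'),
      unitMass_of_mem_stdSimplex (mem_geomReal_iff.1 f.1.2).1]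
  right_inv x := by
    have hpos : 0 < ∑ p, ofStarCoord x p := Fintype.sum_pos (ofStarCoord_pos hi₀ x)
    exact (starCoord_smul (inv_pos.2 hpos) _).trans (starCoord_ofStarCoord hi₀ x)
  continuous_toFun := continuous_starCoord_openStar _
  continuous_invFun :=
    ((continuous_unitMass_comp continuous_ofStarCoord (ofStarCoord_pos hi₀)).subtype_mk
      _).subtype_mk _

theorem nonempty_openStar_homeomorph_sphere_compl {d : ℕ} (y₀ : sphereSpace d) (hi₀ : i₀ ∉ T)
    (hT : #T + k + 1 = n) (hd : d = n + #T) :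
    Nonempty (openStar (thetaComplex (crossEdges n k)) (pairBlock i₀ T) ≃ₜ
      ({y₀}ᶜ : Set (sphereSpace d))) := by
  obtain ⟨e⟩ := nonempty_homeomorph_sphere_compl (F := StarCoord i₀ T) y₀ (by
    rw [finrank_starCoord, finrank_euclideanSpace_fin]
    omega)
  exact ⟨(openStarHomeomorph hi₀ hT).trans e⟩

theorem nonempty_homotopyEquiv_thetaComplex_crossEdges_wedge {ι : Type*} [Finite ι] [Nonempty ι]
    (e : ι ≃ {T : Finset (Fin n) // i₀ ∉ T ∧ #T + k + 1 = n}) {d : ℕ} (hd : d + k + 1 = 2 * n)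
    (y₀ : sphereSpace d) :
    Nonempty (ContinuousMap.HomotopyEquiv (geomReal (thetaComplex (crossEdges n k)))
      (Wedge ι (sphereSpace d) y₀)) := by
  have : CompactSpace (sphereSpace d) := isCompact_iff_compactSpace.1 (isCompact_sphere 0 1)
  have hnot (j) : i₀ ∉ (e j).1 := (e j).2.1
  have hcard (j) : #(e j).1 + k + 1 = n := (e j).2.2
  have hball (j) := nonempty_openStar_homeomorph_sphere_compl y₀ (hnot j) (hcard j) (by grind)
  refine nonempty_homotopyEquiv_wedge_of_openStar (B := fun j => pairBlock i₀ (e j))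
    (a := (i₀, false)) (isRelLowerSet_thetaComplex _) (fun j => insert_nonempty _ _)
    (fun j => ?_) (fun σ hσ hσB => ?_) (fun j j' hjj' => ?_) (fun j => (hball j).some)
  · simpa [pairBlock] using hnot j
  · have hσ_card : #(antipodalPairs σ) + k < n := by
      rcases hσ with rfl | hσ
      · have := hcard (Classical.arbitrary ι)
        simp [antipodalPairs]
        omega
      · exact (mem_thetaComplex_crossEdges.1 hσ).2
    refine insert_mem_thetaComplex_of_forall_not_pairBlock_subset hσ_card fun T hi₀ hT => ?_
    simpa only [Equiv.apply_symm_apply] using hσB (e.symm ⟨T, hi₀, hT⟩)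
  · exact pairBlock_union_notMem_thetaComplex (hcard j) (by grind)
      fun heq => hjj' (e.injective (Subtype.ext heq))

theorem card_subtype_notMem_card_add_add_one_eq (i₀ : Fin n) (hk : k + 1 ≤ n) :
    Fintype.card {T : Finset (Fin n) // i₀ ∉ T ∧ #T + k + 1 = n} = (n - 1).choose k := by
  have hmem (T : Finset (Fin n)) :
      T ∈ powersetCard (n - 1 - k) (univ.erase i₀) ↔ i₀ ∉ T ∧ #T + k + 1 = n := by
    rw [mem_powersetCard, subset_erase]
    grind
  rw [Fintype.card_of_subtype _ hmem, card_powersetCard, card_erase_of_mem (mem_univ _), card_univ,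
    Fintype.card_fin, Nat.choose_symm (by omega)]

end CrossPolytope

/-- For `0 ≤ k ≤ n-1`, `Θ(CrossPoly(n,k))` is homotopy
equivalent to a wedge of `C(n-1, k)` copies of the sphere `S^{2n-k-2}`
(the unit sphere in `ℝ^{2n-k-1}`). -/
theorem theta_cross_polytope (n k : ℕ) (hn : 1 ≤ n) (hk : k ≤ n - 1) :
    Nonempty (ContinuousMap.HomotopyEquiv
      (↥(geomReal (thetaComplex (crossEdges n k))))
      (Wedge (Fin ((n - 1).choose k)) (↥(sphereSpace (2 * n - k - 1)))
        (spherePt _ (by omega)))) := by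
  have : NeZero ((n - 1).choose k) := ⟨(Nat.choose_pos hk).ne'⟩
  have hcard := card_subtype_notMem_card_add_add_one_eq (k := k) (⟨0, hn⟩ : Fin n) (by omega)
  exact nonempty_homotopyEquiv_thetaComplex_crossEdges_wedge (Fintype.equivFinOfCardEq hcard).symm
    (by omega) _
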